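/- Let p be a prime, let l ≥ 0 and n ≥ 0 be integers with n > l·p, and let r be an integer. Then F^{(l)}_p(n,r) ≡ (−1)^l·binom(⌊(n−l−1)/(p−1)⌋, l)·F_p(n−lp, r) (mod p). -/

import Mathlib

open Finset

/-- `x ≡ y (mod p^c)` for rationals: `x = y` or the `p`-adic valuation of `x - y`
is at least `c`. -/
def modCong (p : ℕ) (c : ℤ) (x y : ℚ) : Prop :=
  x = y ∨ c ≤ padicValRat p (x - y)

/-- The binomial coefficient `binom(x,l) = x(x-1)⋯(x-l+1)/l!` for an integer `x`. -/
def intBinom (x : ℤ) (l : ℕ) : ℚ := (∏ i ∈ Finset.range l, ((x:ℚ) - (i:ℚ))) / (l.factorial : ℚ)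

/-- The extended Fleck quotient
`F^{(l)}_{p^a}(n,r) = (-p)^{-⌊(n - l p^a - p^{a-1})/φ(p^a)⌋}
  ∑_{0 ≤ k ≤ n, k ≡ r (mod p^a)} (-1)^k binom(n,k) binom((k-r)/p^a, l)`. -/
noncomputable def Fpa (p a l n : ℕ) (r : ℤ) : ℚ :=
  (-(p:ℚ)) ^ (-(Int.fdiv ((n:ℤ) - (l:ℤ) * (p:ℤ)^a - (p:ℤ)^(a-1)) (Nat.totient (p^a)))) *
    ∑ k ∈ Finset.range (n+1),
      if ((k:ℤ) - r) % ((p:ℤ)^a) = 0 then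
        (-1:ℚ)^k * (n.choose k : ℚ) * intBinom (((k:ℤ) - r) / ((p:ℤ)^a)) l
      else 0

/-- The Fleck quotient `F_p(n,r) = (-p)^{-⌊(n-1)/(p-1)⌋}
`∑_{0 ≤ k ≤ n, k ≡ r (mod p)} (-1)^k binom(n,k) + [n = 0] = F^{(0)}_p(n,r) + [n = 0]`. -/
noncomputable def Fp (p n : ℕ) (r : ℤ) : ℚ :=
  (-(p:ℚ)) ^ (-(Int.fdiv ((n:ℤ) - 1) ((p:ℤ) - 1))) *
    (∑ k ∈ range (n+1), if ((k : ℤ) - r) % p = 0 then (-1 : ℚ)^k * (n.choose k) else 0)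
  + (if n = 0 then 1 else 0)

open Polynomial in
/-- The linear functional on `ℤ[X]` sending `X ^ k` to `binom((k - r) / p, l)` if
`k ≡ r (mod p)` and to `0` otherwise. -/
noncomputable def residueFunctional (p : ℕ) (r : ℤ) (l : ℕ) : ℤ[X] →ₗ[ℤ] ℤ :=
  Polynomial.lsum fun k =>
    (if ((k : ℤ) - r) % (p : ℤ) = 0 then Ring.choose (((k : ℤ) - r) / (p : ℤ)) l else 0 : ℤ) •
      (LinearMap.id : ℤ →ₗ[ℤ] ℤ)

/-- The alternating binomial sum
`∑_{k ≡ r (mod p)} (-1)^k binom(n,k) binom((k - r) / p, l)`. -/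
noncomputable def fleckSum (p : ℕ) (r : ℤ) (l n : ℕ) : ℤ :=
  residueFunctional p r l ((1 - Polynomial.X) ^ n)

section Functional

open Polynomial

variable (p : ℕ) (r : ℤ)

lemma residueFunctional_monomial (l k : ℕ) (a : ℤ) :
    residueFunctional p r l (monomial k a) =
      (if ((k : ℤ) - r) % (p : ℤ) = 0 then Ring.choose (((k : ℤ) - r) / (p : ℤ)) l else 0) * a := by
  rw [residueFunctional, Polynomial.lsum, LinearMap.coe_mk, AddHom.coe_mk,
    Polynomial.sum_monomial_index _ _ (LinearMap.map_zero _), LinearMap.smul_apply, LinearMap.id_apply,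
    smul_eq_mul]

lemma fleckSum_eq_sum (l n : ℕ) :
    fleckSum p r l n = ∑ k ∈ Finset.range (n + 1),
      if ((k : ℤ) - r) % (p : ℤ) = 0 then
        (-1) ^ k * (n.choose k : ℤ) * Ring.choose (((k : ℤ) - r) / (p : ℤ)) l else 0 := by
  have h : (1 - X : ℤ[X]) ^ n =
      ∑ k ∈ Finset.range (n + 1), monomial k ((-1) ^ k * (n.choose k : ℤ)) := by
    rw [sub_eq_neg_add, add_pow]
    refine Finset.sum_congr rfl fun k _ => ?_
    rw [← C_mul_X_pow_eq_monomial, neg_pow]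
    simp only [one_pow, mul_one, map_mul, map_pow, map_neg, map_one, map_natCast]
    ring
  rw [fleckSum, h, map_sum]
  refine Finset.sum_congr rfl fun k _ => ?_
  rw [residueFunctional_monomial]
  split_ifs <;> ring

variable {p}

lemma residueFunctional_zero_X_pow_mul (f : ℤ[X]) :
    residueFunctional p r 0 (X ^ p * f) = residueFunctional p r 0 f := by
  induction f using Polynomial.induction_on' with
  | add f g hf hg => rw [mul_add, map_add, map_add, hf, hg]
  | monomial k a =>
    have hmod : (((p + k : ℕ) : ℤ) - r) % (p : ℤ) = ((k : ℤ) - r) % (p : ℤ) := by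
      push_cast
      rw [add_sub_assoc, Int.add_emod_left]
    rw [X_pow_mul_monomial, residueFunctional_monomial, residueFunctional_monomial, add_comm k p,
      hmod]
    simp

lemma residueFunctional_succ_X_pow_mul (hp : 0 < p) (l : ℕ) (f : ℤ[X]) :
    residueFunctional p r (l + 1) (X ^ p * f) =
      residueFunctional p r l f + residueFunctional p r (l + 1) f := by
  induction f using Polynomial.induction_on' with
  | add f g hf hg => rw [mul_add, map_add, map_add, map_add, hf, hg]; ring
  | monomial k a =>
    have hmod : (((p + k : ℕ) : ℤ) - r) % (p : ℤ) = ((k : ℤ) - r) % (p : ℤ) := by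
      push_cast
      rw [add_sub_assoc, Int.add_emod_left]
    have hdiv : (((p + k : ℕ) : ℤ) - r) / (p : ℤ) = ((k : ℤ) - r) / (p : ℤ) + 1 := by
      push_cast
      rw [add_sub_assoc, Int.add_ediv_of_dvd_left dvd_rfl, Int.ediv_self (by omega), add_comm]
    rw [X_pow_mul_monomial, residueFunctional_monomial, residueFunctional_monomial,
      residueFunctional_monomial, add_comm k p, hmod, hdiv, Ring.choose_succ_succ]
    split_ifs <;> ring

lemma residueFunctional_X_pow_mul_one_sub_X_pow (hp : 0 < p) (l m : ℕ) :
    residueFunctional p r l (X ^ p * (1 - X) ^ m) = fleckSum p r l m +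
      ∑ k ∈ Finset.range (p - 1),
        (-1) ^ (k + 1) * (p.choose (k + 1) : ℤ) * fleckSum p r l (m + (k + 1)) +
      (-1) ^ p * fleckSum p r l (m + p) := by
  have h : (X : ℤ[X]) ^ p * (1 - X) ^ m =
      ∑ k ∈ Finset.range (p + 1), ((-1) ^ k * (p.choose k : ℤ)) • (1 - X : ℤ[X]) ^ (m + k) := by
    have hX : (X : ℤ[X]) = -(1 - X) + 1 := by ring
    conv_lhs => rw [hX, add_pow, Finset.sum_mul]
    refine Finset.sum_congr rfl fun k _ => ?_
    rw [neg_pow, zsmul_eq_mul, pow_add]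
    push_cast
    ring_nf
  obtain ⟨q, rfl⟩ : ∃ q, p = q + 1 := ⟨p - 1, by omega⟩
  rw [h, map_sum, Finset.sum_range_succ, Finset.sum_range_succ']
  simp only [map_smul, smul_eq_mul, fleckSum, Nat.choose_self, Nat.choose_zero_right,
    Nat.add_sub_cancel, Nat.cast_one, pow_zero, add_zero, mul_one, one_mul]
  rw [add_comm (Finset.sum _ _)]

end Functional

variable {p : ℕ} (r : ℤ)

lemma fleckSum_zero_recurrence (hp : 0 < p) (m : ℕ) :
    (-1) ^ p * fleckSum p r 0 (m + p) = -∑ k ∈ Finset.range (p - 1),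
      (-1) ^ (k + 1) * (p.choose (k + 1) : ℤ) * fleckSum p r 0 (m + (k + 1)) := by
  have h := residueFunctional_X_pow_mul_one_sub_X_pow r hp 0 m
  rw [residueFunctional_zero_X_pow_mul] at h
  change fleckSum p r 0 m = _ at h
  linarith

lemma fleckSum_succ_recurrence (hp : 0 < p) (l m : ℕ) :
    (-1) ^ p * fleckSum p r (l + 1) (m + p) = fleckSum p r l m - ∑ k ∈ Finset.range (p - 1),
      (-1) ^ (k + 1) * (p.choose (k + 1) : ℤ) * fleckSum p r (l + 1) (m + (k + 1)) := by
  have h := residueFunctional_X_pow_mul_one_sub_X_pow r hp (l + 1) m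
  rw [residueFunctional_succ_X_pow_mul r hp] at h
  change fleckSum p r l m + fleckSum p r (l + 1) m = _ at h
  linarith

lemma pow_succ_dvd_sum_choose_mul (hp : p.Prime) (e : ℕ) (g : ℕ → ℤ)
    (hg : ∀ k < p - 1, (p : ℤ) ^ e ∣ g k) :
    (p : ℤ) ^ (e + 1) ∣
      ∑ k ∈ Finset.range (p - 1), (-1) ^ (k + 1) * (p.choose (k + 1) : ℤ) * g k := by
  refine Finset.dvd_sum fun k hk => ?_
  have hk' := Finset.mem_range.mp hk
  have hc : (p : ℤ) ∣ (p.choose (k + 1) : ℤ) :=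
    Int.natCast_dvd_natCast.mpr (hp.dvd_choose_self (by omega) (by omega))
  rw [pow_succ', mul_assoc]
  exact (mul_dvd_mul hc (hg k hk')).mul_left _

lemma dvd_of_dvd_neg_one_pow_mul {a b : ℤ} (n : ℕ) (h : a ∣ (-1) ^ n * b) : a ∣ b :=
  ((isUnit_one.neg.pow n).dvd_mul_left).mp h

/-- Weisman's theorem with Wan's extension: `fleckSum p r l n` is divisible by `p ^ e` once
`n > l p + e (p - 1)`. -/
lemma pow_dvd_fleckSum (hp : p.Prime) (e l n : ℕ) (h : l * p + e * (p - 1) < n) :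
    (p : ℤ) ^ e ∣ fleckSum p r l n := by
  induction n using Nat.strong_induction_on generalizing e l with
  | _ n ih =>
  obtain _ | e := e
  · simp
  have hp2 := hp.two_le
  rw [add_one_mul] at h
  obtain ⟨m, rfl⟩ : ∃ m, n = m + p := ⟨n - p, by omega⟩
  have hsum := pow_succ_dvd_sum_choose_mul hp e (fun k => fleckSum p r l (m + (k + 1)))
    fun k hk => ih _ (by omega) e l (by omega)
  refine dvd_of_dvd_neg_one_pow_mul p ?_
  obtain _ | l := l
  · rw [fleckSum_zero_recurrence r hp.pos]
    exact hsum.neg_right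
  · rw [fleckSum_succ_recurrence r hp.pos]
    rw [add_one_mul] at h
    exact dvd_sub (ih m (by omega) (e + 1) l (by rw [add_one_mul]; omega)) hsum

lemma prime_dvd_one_add_neg_one_pow (hp : p.Prime) : (p : ℤ) ∣ 1 + (-1) ^ p := by
  obtain rfl | hodd := hp.eq_two_or_odd'
  · norm_num
  · simp [hodd.neg_one_pow]

lemma pow_succ_dvd_one_add_neg_one_pow_mul_fleckSum (hp : p.Prime) (e n : ℕ)
    (h : e * (p - 1) < n) : (p : ℤ) ^ (e + 1) ∣ (1 + (-1) ^ p) * fleckSum p r 0 n := by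
  rw [pow_succ']
  exact mul_dvd_mul (prime_dvd_one_add_neg_one_pow hp) (pow_dvd_fleckSum r hp e 0 n (by omega))

/-- If `n > e (p - 1)`, then
`fleckSum p r l (n + l p) ≡ (-1)^l binom(e + l, l) fleckSum p r 0 n (mod p^(e+1))`. -/
lemma pow_succ_dvd_fleckSum_sub (hp : p.Prime) (l e n : ℕ) (h : e * (p - 1) < n) :
    (p : ℤ) ^ (e + 1) ∣ fleckSum p r l (n + l * p) -
      (-1) ^ l * ((e + l).choose l : ℤ) * fleckSum p r 0 n := by
  induction l generalizing e n with
  | zero => simp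
  | succ l ihl =>
  have hp2 := hp.two_le
  induction e generalizing n with
  | zero =>
    have hunit := pow_succ_dvd_one_add_neg_one_pow_mul_fleckSum r hp 0 n h
    have hsum := pow_succ_dvd_sum_choose_mul hp 0
      (fun k => fleckSum p r (l + 1) (n + l * p + (k + 1))) (by simp)
    have hrec := fleckSum_succ_recurrence r hp.pos l (n + l * p)
    have hl := ihl 0 n h
    refine dvd_of_dvd_neg_one_pow_mul p ?_
    rw [add_one_mul, ← add_assoc, mul_sub, hrec]
    simp only [zero_add, Nat.choose_self] at hl hsum hunit ⊢
    refine (dvd_add (dvd_sub hl hsum) (hunit.mul_left ((-1) ^ l))).trans (dvd_of_eq ?_)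
    push_cast
    ring
  | succ e ihe =>
    have hunit := pow_succ_dvd_one_add_neg_one_pow_mul_fleckSum r hp (e + 1) n h
    rw [add_one_mul] at h
    obtain ⟨m, rfl⟩ : ∃ m, n = m + p := ⟨n - p, by omega⟩
    have hrec := fleckSum_succ_recurrence r hp.pos l (m + p + l * p)
    have hrec₀ := fleckSum_zero_recurrence r hp.pos m
    have hl := ihl (e + 1) (m + p) (by rw [add_one_mul]; omega)
    have hsum := pow_succ_dvd_sum_choose_mul hp (e + 1)
      (fun k => fleckSum p r (l + 1) (m + p + l * p + (k + 1)) -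
        (-1) ^ (l + 1) * ((e + (l + 1)).choose (l + 1) : ℤ) * fleckSum p r 0 (m + (k + 1)))
      fun k hk => by
        have := ihe (m + (k + 1)) (by omega)
        convert this using 3
        ring
    have hsplit : ∑ k ∈ Finset.range (p - 1), (-1) ^ (k + 1) * (p.choose (k + 1) : ℤ) *
        (fleckSum p r (l + 1) (m + p + l * p + (k + 1)) -
          (-1) ^ (l + 1) * ((e + (l + 1)).choose (l + 1) : ℤ) * fleckSum p r 0 (m + (k + 1))) =
        ∑ k ∈ Finset.range (p - 1), (-1) ^ (k + 1) * (p.choose (k + 1) : ℤ) *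
          fleckSum p r (l + 1) (m + p + l * p + (k + 1)) -
        (-1) ^ (l + 1) * ((e + (l + 1)).choose (l + 1) : ℤ) *
          ∑ k ∈ Finset.range (p - 1), (-1) ^ (k + 1) * (p.choose (k + 1) : ℤ) *
            fleckSum p r 0 (m + (k + 1)) := by
      rw [Finset.mul_sum, ← Finset.sum_sub_distrib]
      exact Finset.sum_congr rfl fun k _ => by ring
    rw [hsplit] at hsum
    have hpascal : ((e + 1 + (l + 1)).choose (l + 1) : ℤ) =
        (e + 1 + l).choose l + (e + (l + 1)).choose (l + 1) := by
      rw [show e + 1 + (l + 1) = (e + 1 + l) + 1 by ring, Nat.choose_succ_succ,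
        show e + (l + 1) = e + 1 + l by ring]
      push_cast
      ring
    refine dvd_of_dvd_neg_one_pow_mul p ?_
    rw [add_one_mul, ← add_assoc, mul_sub, hrec, hpascal]
    refine (dvd_add (dvd_sub hl hsum)
      (hunit.mul_left ((-1) ^ l * ((e + 1 + l).choose l : ℤ)))).trans (dvd_of_eq ?_)
    linear_combination ((-1) ^ (l + 1) * ((e + (l + 1)).choose (l + 1) : ℤ)) * hrec₀

lemma intBinom_eq_choose (x : ℤ) (l : ℕ) : intBinom x l = (Ring.choose x l : ℤ) := by
  have h := Ring.descPochhammer_eq_factorial_smul_choose x l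
  rw [← Polynomial.eval_eq_smeval, descPochhammer_eval_eq_prod_range, nsmul_eq_mul] at h
  rw [intBinom, div_eq_iff (by exact_mod_cast l.factorial_ne_zero), mul_comm]
  exact_mod_cast h

lemma Fpa_one_eq (hp : p.Prime) (l e n : ℕ) (h : e = (n - l * p - 1) / (p - 1))
    (hn : l * p < n) :
    Fpa p 1 l n r = (-(p : ℚ)) ^ (-(e : ℤ)) * (fleckSum p r l n : ℚ) := by
  have hp2 := hp.two_le
  have hexp : Int.fdiv ((n : ℤ) - (l : ℤ) * (p : ℤ) ^ 1 - (p : ℤ) ^ (1 - 1))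
      (Nat.totient (p ^ 1)) = e := by
    rw [pow_one, pow_one, Nat.totient_prime hp, Int.fdiv_eq_ediv_of_nonneg _ (by positivity), h]
    push_cast [Nat.sub_sub, show l * p + 1 ≤ n from hn]
    simp [sub_sub]
  rw [Fpa, hexp, fleckSum_eq_sum]
  push_cast
  simp only [pow_one, intBinom_eq_choose]

lemma Fp_eq (hp : p.Prime) (e n : ℕ) (h : e = (n - 1) / (p - 1)) (hn : 0 < n) :
    Fp p n r = (-(p : ℚ)) ^ (-(e : ℤ)) * (fleckSum p r 0 n : ℚ) := by
  have hp2 := hp.two_le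
  have hexp : Int.fdiv ((n : ℤ) - 1) ((p : ℤ) - 1) = e := by
    rw [Int.fdiv_eq_ediv_of_nonneg _ (by omega), h]
    push_cast [show 1 ≤ n from hn, hp.one_le]
    rfl
  rw [Fp, hexp, fleckSum_eq_sum, if_neg hn.ne']
  push_cast
  simp

theorem stmt18 (p l n : ℕ) (hp : p.Prime) (hn : l * p < n) (r : ℤ) :
    modCong p 1 (Fpa p 1 l n r)
      ((-1:ℚ)^l * (((n-l-1)/(p-1)).choose l : ℚ) * Fp p (n - l*p) r) := by
  have := Fact.mk hp
  have hp2 := hp.two_le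
  obtain ⟨m, rfl⟩ : ∃ m, n = m + l * p := ⟨n - l * p, by omega⟩
  have hm : 0 < m := by omega
  set e := (m - 1) / (p - 1) with he
  have hfloor : (m + l * p - l - 1) / (p - 1) = e + l := by
    rw [he, ← Nat.add_mul_div_right _ _ (by omega : 0 < p - 1), Nat.mul_sub_one]
    have := Nat.le_mul_of_pos_right l hp.pos
    congr 1
    omega
  rw [hfloor, Nat.add_sub_cancel, Fpa_one_eq r hp l e _ (by rw [Nat.add_sub_cancel]) hn,
    Fp_eq r hp e m he hm]
  have hlt : e * (p - 1) < m := by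
    have := Nat.div_mul_le_self (m - 1) (p - 1)
    rw [← he] at this
    omega
  obtain ⟨c, hc⟩ := pow_succ_dvd_fleckSum_sub r hp l e m hlt
  have hdiff : (-(p : ℚ)) ^ (-(e : ℤ)) * (fleckSum p r l (m + l * p) : ℚ) -
      (-1 : ℚ) ^ l * ((e + l).choose l : ℚ) *
        ((-(p : ℚ)) ^ (-(e : ℤ)) * (fleckSum p r 0 m : ℚ)) =
      (((p : ℤ) * ((-1) ^ e * c) : ℤ) : ℚ) := by
    have hc' : (fleckSum p r l (m + l * p) : ℚ) -
        (-1) ^ l * ((e + l).choose l : ℚ) * (fleckSum p r 0 m : ℚ) = (p : ℚ) ^ (e + 1) * c := by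
      exact_mod_cast hc
    have hp0 : (p : ℚ) ≠ 0 := by exact_mod_cast hp.ne_zero
    have hpow : (-(p : ℚ)) ^ (-(e : ℤ)) * (p : ℚ) ^ e = (-1) ^ e := by
      rw [zpow_neg, zpow_natCast, neg_pow, mul_inv, mul_assoc, inv_mul_cancel₀ (pow_ne_zero _ hp0),
        mul_one, ← inv_pow, inv_neg, inv_one]
    push_cast
    linear_combination (-(p : ℚ)) ^ (-(e : ℤ)) * hc' + p * c * hpow
  rw [modCong]
  refine or_iff_not_imp_left.mpr fun hne => ?_
  have hne' := sub_ne_zero.mpr hne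
  rw [hdiff] at hne' ⊢
  rw [padicValRat.of_int]
  have hz := Int.cast_ne_zero.mp hne'
  have hval := (padicValInt_dvd_iff (p := p) 1 ((p : ℤ) * ((-1) ^ e * c))).mp (by simp)
  exact_mod_cast hval.resolve_left hz
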